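/- Let n = 2^r for some r > 0 and let 1 < 2k ≤ n. There is no continuous C_2-equivariant map f : V_{n,n-1} → V_{n,2k}, where C_2 acts on V_{n,n-1} by the antipodal action a · (v_1, …, v_{n-1}) = (−v_1, …, −v_{n-1}) and on V_{n,2k} by the flip action. (V_{n,n-1} is identified with SO(n).) -/

import Mathlib

/-- The index flip on `Fin (2k)`: swaps `2i ↔ 2i + 1`. -/
def finFlip {k : ℕ} (i : Fin (2 * k)) : Fin (2 * k) :=
  ⟨if i.1 % 2 = 0 then i.1 + 1 else i.1 - 1, by
    rcases i with ⟨v, hv⟩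
    dsimp only
    split <;> omega⟩

lemma finFlip_involutive {k : ℕ} : Function.Involutive (finFlip (k := k)) := by
  intro i
  rcases i with ⟨v, hv⟩
  apply Fin.ext
  simp only [finFlip]
  split_ifs <;> omega

lemma finFlip_injective {k : ℕ} : Function.Injective (finFlip (k := k)) :=
  finFlip_involutive.injective

/-- The real Stiefel manifold `V_{n,m}` of orthonormal `m`-frames in `ℝⁿ`. -/
abbrev Stiefel (n m : ℕ) : Type :=
  { v : Fin m → EuclideanSpace ℝ (Fin n) // Orthonormal ℝ v }

/-- The flip involution on `V_{n,2k}`: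
`(v₁, v₂, …, v_{2k}) ↦ (v₂, v₁, …, v_{2k}, v_{2k-1})`. -/
def flipFrame {n k : ℕ} (v : Stiefel n (2 * k)) : Stiefel n (2 * k) :=
  ⟨v.1 ∘ finFlip, v.2.comp finFlip finFlip_injective⟩

/-- The antipodal involution on `V_{n,m}`: `(v₁, …, v_m) ↦ (−v₁, …, −v_m)`. -/
def negFrame {n m : ℕ} (v : Stiefel n m) : Stiefel n m :=
  ⟨fun i => -(v.1 i), by
    have h2 := v.2
    rw [orthonormal_iff_ite] at h2 ⊢
    intro i j
    simpa [inner_neg_neg] using h2 i j⟩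


namespace BU

/-- Mod 2 chains on lists (ordered simplices) of points. -/
abbrev Ch (X : Type) := List X →₀ ZMod 2

noncomputable section

def sg {X : Type} (l : List X) : Ch X := Finsupp.single l 1

lemma add_self' {M : Type*} [AddCommGroup M] [Module (ZMod 2) M] (c : M) : c + c = 0 :=
  ZModModule.add_self c

lemma ch_ext {X : Type} {M : Type*} [AddCommMonoid M] [Module (ZMod 2) M]
    {f g : Ch X →ₗ[ZMod 2] M} (h : ∀ l, f (sg l) = g (sg l)) : f = g := by
  apply Finsupp.lhom_ext'
  intro l
  ext
  exact h l

lemma ch_ind {X : Type} {p : Ch X → Prop} (c : Ch X) (h0 : p 0)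
    (h : ∀ l, p (sg l)) (ha : ∀ a b, p a → p b → p (a + b)) : p c := by
  induction c using Finsupp.induction_linear with
  | zero => exact h0
  | add f g hf hg => exact ha f g hf hg
  | single l b =>
    have : b = 0 ∨ b = 1 := by revert b; decide
    rcases this with rfl | rfl
    · simpa using h0
    · exact h l

def lin {X : Type} {M : Type*} [AddCommMonoid M] [Module (ZMod 2) M] (f : List X → M) :
    Ch X →ₗ[ZMod 2] M := Finsupp.linearCombination (ZMod 2) f

@[simp] lemma lin_sg {X : Type} {M : Type*} [AddCommMonoid M] [Module (ZMod 2) M]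
    (f : List X → M) (l : List X) : lin f (sg l) = f l := by
  simp [lin, sg]

def cns {X : Type} (x : X) : Ch X →ₗ[ZMod 2] Ch X := lin fun l => sg (x :: l)

@[simp] lemma cns_sg {X : Type} (x : X) (l : List X) : cns x (sg l) = sg (x :: l) := by
  simp [cns]

def mp {X Y : Type} (f : X → Y) : Ch X →ₗ[ZMod 2] Ch Y := lin fun l => sg (l.map f)

@[simp] lemma mp_sg {X Y : Type} (f : X → Y) (l : List X) : mp f (sg l) = sg (l.map f) := by
  simp [mp]

lemma mp_mp {X Y Z : Type} (f : X → Y) (g : Y → Z) (c : Ch X) :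
    mp g (mp f c) = mp (g ∘ f) c := by
  have : (mp g).comp (mp f) = mp (g ∘ f) := ch_ext (by simp)
  exact LinearMap.congr_fun this c

lemma mp_cns {X Y : Type} (f : X → Y) (x : X) (c : Ch X) :
    mp f (cns x c) = cns (f x) (mp f c) := by
  have : (mp f).comp (cns x) = (cns (f x)).comp (mp f) := ch_ext (by simp)
  exact LinearMap.congr_fun this c

/-- coefficient of the empty list -/
def nl {X : Type} : Ch X →ₗ[ZMod 2] ZMod 2 := lin fun l => match l with | [] => 1 | _ => 0

def aug {X : Type} : Ch X →ₗ[ZMod 2] ZMod 2 := lin fun l => match l with | [_] => 1 | _ => 0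

@[simp] lemma nl_nil {X : Type} : nl (sg ([] : List X)) = 1 := by simp [nl]
@[simp] lemma nl_cons {X : Type} (x : X) (l : List X) : nl (sg (x :: l)) = 0 := by simp [nl]
@[simp] lemma aug_nil {X : Type} : aug (sg ([] : List X)) = 0 := by simp [aug]
@[simp] lemma aug_one {X : Type} (x : X) : aug (sg [x]) = 1 := by simp [aug]
@[simp] lemma aug_two {X : Type} (x y : X) (l : List X) : aug (sg (x :: y :: l)) = 0 := by
  simp [aug]

@[simp] lemma nl_cns {X : Type} (x : X) (c : Ch X) : nl (cns x c) = 0 := by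
  have : nl.comp (cns x) = 0 := ch_ext (by simp)
  exact LinearMap.congr_fun this c

@[simp] lemma aug_cns {X : Type} (x : X) (c : Ch X) : aug (cns x c) = nl c := by
  have : aug.comp (cns x) = nl := ch_ext (by intro l; cases l <;> simp)
  exact LinearMap.congr_fun this c

@[simp] lemma nl_mp {X Y : Type} (f : X → Y) (c : Ch X) : nl (mp f c) = nl c := by
  have : nl.comp (mp f) = nl := ch_ext (by intro l; cases l <;> simp)
  exact LinearMap.congr_fun this c

@[simp] lemma aug_mp {X Y : Type} (f : X → Y) (c : Ch X) : aug (mp f c) = aug c := by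
  have : aug.comp (mp f) = aug := ch_ext (by
    intro l
    rcases l with _ | ⟨x, _ | ⟨y, l⟩⟩ <;> simp)
  exact LinearMap.congr_fun this c

def dL {X : Type} : List X → Ch X
  | [] => 0
  | x :: l => sg l + cns x (dL l)

/-- augmented boundary -/
def d {X : Type} : Ch X →ₗ[ZMod 2] Ch X := lin dL

@[simp] lemma d_nil {X : Type} : d (sg ([] : List X)) = 0 := by simp [d, dL]

lemma d_cns {X : Type} (x : X) (c : Ch X) : d (cns x c) = c + cns x (d c) := by
  have : d.comp (cns x) = LinearMap.id + (cns x).comp d := ch_ext (by simp [d, dL])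
  exact LinearMap.congr_fun this c

lemma d_cons {X : Type} (x : X) (l : List X) : d (sg (x :: l)) = sg l + cns x (d (sg l)) := by
  rw [← cns_sg, d_cns]

lemma nl_d {X : Type} (c : Ch X) : nl (d c) = aug c := by
  have : nl.comp d = aug (X := X) := ch_ext (by
    intro l
    rcases l with _ | ⟨x, _ | ⟨y, l⟩⟩ <;> simp [d_cons])
  exact LinearMap.congr_fun this c

/-- boundary -/
def bd {X : Type} : Ch X →ₗ[ZMod 2] Ch X := d + aug.smulRight (sg [])

lemma bd_apply {X : Type} (c : Ch X) : bd c = d c + aug c • sg [] := by simp [bd]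

lemma d_mp {X Y : Type} (f : X → Y) (c : Ch X) : d (mp f c) = mp f (d c) := by
  have : d.comp (mp f) = (mp f).comp d := ch_ext (by
    intro l
    induction l with
    | nil => simp
    | cons x l ih =>
      simp only [LinearMap.comp_apply, mp_sg, List.map_cons, d_cons, map_add, mp_cns] at ih ⊢
      rw [ih])
  exact LinearMap.congr_fun this c

lemma bd_mp {X Y : Type} (f : X → Y) (c : Ch X) : bd (mp f c) = mp f (bd c) := by
  simp [bd_apply, d_mp]

def PL {X Y : Type} : List X → List Y → Ch (X × Y)
  | [], _ => 0
  | _ :: _, [] => 0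
  | x :: l, y :: m =>
      cns (x, y) ((nl (sg l) * nl (sg m)) • sg [] + PL l (y :: m) + PL (x :: l) m)
termination_by l m => l.length + m.length

/-- cross product -/
def P {X Y : Type} : Ch X →ₗ[ZMod 2] Ch Y →ₗ[ZMod 2] Ch (X × Y) :=
  lin fun l => lin fun m => PL l m

lemma ch_ext2 {X Y : Type} {M : Type*} [AddCommMonoid M] [Module (ZMod 2) M]
    {f g : Ch X →ₗ[ZMod 2] Ch Y →ₗ[ZMod 2] M} (h : ∀ l m, f (sg l) (sg m) = g (sg l) (sg m)) :
    f = g := ch_ext fun l => ch_ext fun m => h l m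

@[simp] lemma P_nil_left {X Y : Type} (c : Ch Y) : P (sg ([] : List X)) c = 0 := by
  have : P (sg ([] : List X)) = (0 : Ch Y →ₗ[ZMod 2] Ch (X × Y)) :=
    ch_ext (by intro l; simp [P, PL])
  rw [this]; rfl

@[simp] lemma P_nil_right {X Y : Type} (c : Ch X) : P c (sg ([] : List Y)) = 0 := by
  have : P.flip (sg ([] : List Y)) = (0 : Ch X →ₗ[ZMod 2] Ch (X × Y)) :=
    ch_ext (by intro l; cases l <;> simp [P, PL])
  exact LinearMap.congr_fun this c

lemma P_cns {X Y : Type} (x : X) (y : Y) (c : Ch X) (c' : Ch Y) :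
    P (cns x c) (cns y c') =
      cns (x, y) ((nl c * nl c') • sg [] + P c (cns y c') + P (cns x c) c') := by
  induction c using ch_ind with
  | h0 => simp
  | ha a b h1 h2 =>
    simp only [map_add, LinearMap.add_apply, h1, h2, add_mul, add_smul]; abel
  | h l =>
    induction c' using ch_ind with
    | h0 => simp
    | ha a b h1 h2 =>
      simp only [map_add, h1, h2, mul_add, add_smul]; abel
    | h m =>
      simp only [cns_sg]
      simp [P, PL]

lemma d_P_list {X Y : Type} (N : ℕ) (l : List X) (m : List Y) (hN : l.length + m.length ≤ N) :
    d (P (sg l) (sg m)) = P (d (sg l)) (sg m) + P (sg l) (d (sg m))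
      + (aug (sg l) * aug (sg m)) • sg [] := by
  induction N generalizing l m with
  | zero =>
    have : l = [] := by rw [← List.length_eq_zero_iff]; omega
    subst this; simp
  | succ N ih =>
    rcases l with _ | ⟨x, l⟩
    · simp
    rcases m with _ | ⟨y, m⟩
    · simp
    have h1 := ih l (y :: m) (by simp at hN ⊢; omega)
    have h2 := ih (x :: l) m (by simp at hN ⊢; omega)
    rw [← cns_sg, ← cns_sg] at *
    rw [P_cns, d_cns]
    simp only [map_add, map_smul, d_nil, h1, h2, d_cns, LinearMap.add_apply, P_cns, nl_d, aug_cns,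
      smul_zero, zero_add]
    have e := add_self' (cns (x, y) (P (sg l) (sg m)))
    apply eq_of_sub_eq_zero
    rw [← e]
    abel

lemma d_P {X Y : Type} (c : Ch X) (c' : Ch Y) :
    d (P c c') = P (d c) c' + P c (d c') + (aug c * aug c') • sg [] := by
  induction c using ch_ind with
  | h0 => simp
  | ha a b h1 h2 =>
    simp only [map_add, LinearMap.add_apply, h1, h2, add_mul, add_smul]; abel
  | h l =>
    induction c' using ch_ind with
    | h0 => simp
    | ha a b h1 h2 =>
      simp only [map_add, h1, h2, mul_add, add_smul]; abel
    | h m => exact d_P_list _ l m le_rfl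

lemma nl_P {X Y : Type} (c : Ch X) (c' : Ch Y) : nl (P c c') = 0 := by
  have : P.compr₂ (nl (X := X × Y)) = (0 : Ch X →ₗ[ZMod 2] Ch Y →ₗ[ZMod 2] ZMod 2) := by
    apply ch_ext2
    intro l m
    rcases l with _ | ⟨x, l⟩
    · simp
    rcases m with _ | ⟨y, m⟩
    · simp
    rw [← cns_sg, ← cns_sg]
    simp only [LinearMap.compr₂_apply]
    rw [P_cns]
    simp
  exact LinearMap.congr_fun (LinearMap.congr_fun this c) c'

lemma aug_P {X Y : Type} (c : Ch X) (c' : Ch Y) : aug (P c c') = aug c * aug c' := by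
  induction c using ch_ind with
  | h0 => simp
  | ha a b h1 h2 =>
    simp only [map_add, LinearMap.add_apply, h1, h2, add_mul]
  | h l =>
    induction c' using ch_ind with
    | h0 => simp
    | ha a b h1 h2 =>
      simp only [map_add, h1, h2, mul_add]
    | h m =>
      rcases l with _ | ⟨x, l⟩
      · simp
      rcases m with _ | ⟨y, m⟩
      · simp
      rw [← cns_sg, ← cns_sg, P_cns]
      simp only [aug_cns, map_add, nl_P, map_smul, nl_nil]
      simp

lemma bd_P {X Y : Type} (c : Ch X) (c' : Ch Y) :
    bd (P c c') = P (bd c) c' + P c (bd c') := by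
  simp only [bd_apply, d_P, aug_P, map_add, map_smul, LinearMap.add_apply, LinearMap.smul_apply,
    P_nil_left, P_nil_right, smul_zero, add_zero]
  have e := add_self' ((aug c * aug c') • sg ([] : List (X × Y)))
  rw [add_assoc, e, add_zero]

lemma mp_P {X Y X' Y' : Type} (f : X → X') (g : Y → Y') (c : Ch X) (c' : Ch Y) :
    mp (Prod.map f g) (P c c') = P (mp f c) (mp g c') := by
  have key : ∀ (N : ℕ) (l : List X) (m : List Y), l.length + m.length ≤ N →
      mp (Prod.map f g) (P (sg l) (sg m)) = P (mp f (sg l)) (mp g (sg m)) := by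
    intro N
    induction N with
    | zero =>
      intro l m hN
      have : l = [] := by rw [← List.length_eq_zero_iff]; omega
      subst this; simp
    | succ N ih =>
      intro l m hN
      rcases l with _ | ⟨x, l⟩
      · simp
      rcases m with _ | ⟨y, m⟩
      · simp
      have h1 := ih l (y :: m) (by simp at hN ⊢; omega)
      have h2 := ih (x :: l) m (by simp at hN ⊢; omega)
      rw [← cns_sg, ← cns_sg] at *
      rw [P_cns, mp_cns, mp_cns, mp_cns, P_cns]
      simp only [map_add, map_smul, h1, h2, mp_cns, nl_mp]
      simp
  induction c using ch_ind with
  | h0 => simp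
  | ha a b h1 h2 =>
    simp only [map_add, LinearMap.add_apply, h1, h2]
  | h l =>
    induction c' using ch_ind with
    | h0 => simp
    | ha a b h1 h2 =>
      simp only [map_add, h1, h2]
    | h m => exact key _ l m le_rfl

lemma swap_P {X Y : Type} (c : Ch X) (c' : Ch Y) :
    mp Prod.swap (P c c') = P c' c := by
  have key : ∀ (N : ℕ) (l : List X) (m : List Y), l.length + m.length ≤ N →
      mp Prod.swap (P (sg l) (sg m)) = P (sg m) (sg l) := by
    intro N
    induction N with
    | zero =>
      intro l m hN
      have : l = [] := by rw [← List.length_eq_zero_iff]; omega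
      subst this; simp
    | succ N ih =>
      intro l m hN
      rcases l with _ | ⟨x, l⟩
      · simp
      rcases m with _ | ⟨y, m⟩
      · simp
      have h1 := ih l (y :: m) (by simp at hN ⊢; omega)
      have h2 := ih (x :: l) m (by simp at hN ⊢; omega)
      rw [← cns_sg, ← cns_sg] at *
      rw [P_cns, mp_cns, P_cns]
      simp only [map_add, map_smul, h1, h2]
      simp only [Prod.swap, mp_sg, List.map_nil]
      rw [mul_comm, add_right_comm]
  induction c using ch_ind with
  | h0 => simp
  | ha a b h1 h2 =>
    simp only [map_add, LinearMap.add_apply, h1, h2]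
  | h l =>
    induction c' using ch_ind with
    | h0 => simp
    | ha a b h1 h2 =>
      simp only [map_add, LinearMap.add_apply, h1, h2]
    | h m => exact key _ l m le_rfl

end
end BU

namespace BU
noncomputable section

/-- chains of `U`-small `k`-simplices -/
def Sm {X : Type} (U : Set (X × X)) (k : ℕ) : Submodule (ZMod 2) (Ch X) :=
  Finsupp.supported (ZMod 2) (ZMod 2) {l | l.length = k + 1 ∧ ∀ a ∈ l, ∀ b ∈ l, (a, b) ∈ U}

lemma supp_ind {X : Type} {M : Type*} [AddCommGroup M] [Module (ZMod 2) M]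
    (s : Set (List X)) (f : Ch X →ₗ[ZMod 2] M) (N : Submodule (ZMod 2) M)
    (h : ∀ l ∈ s, f (sg l) ∈ N) {c : Ch X} (hc : c ∈ Finsupp.supported (ZMod 2) (ZMod 2) s) :
    f c ∈ N := by
  rw [Finsupp.supported_eq_span_single] at hc
  have : Submodule.span (ZMod 2) ((fun i => Finsupp.single i (1 : ZMod 2)) '' s) ≤ N.comap f := by
    rw [Submodule.span_le]
    rintro _ ⟨l, hl, rfl⟩
    exact h l hl
  exact this hc

lemma sg_supp {X : Type} {s : Set (List X)} {l : List X} (h : l ∈ s) :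
    sg l ∈ Finsupp.supported (ZMod 2) (ZMod 2) s :=
  Finsupp.single_mem_supported _ _ h

lemma mp_mem {X Y : Type} {U : Set (X × X)} {V : Set (Y × Y)} {k : ℕ} (f : X → Y)
    (h : ∀ a b, (a, b) ∈ U → (f a, f b) ∈ V) {c : Ch X} (hc : c ∈ Sm U k) :
    mp f c ∈ Sm V k := by
  refine supp_ind _ (mp f) (Sm V k) ?_ hc
  rintro l ⟨h1, h2⟩
  rw [mp_sg]
  refine sg_supp ⟨by simpa using h1, ?_⟩
  intro a ha b hb
  obtain ⟨a1, ha1, rfl⟩ := List.mem_map.1 ha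
  obtain ⟨b1, hb1, rfl⟩ := List.mem_map.1 hb
  exact h _ _ (h2 a1 ha1 b1 hb1)

lemma PL_supp {X Y : Type} (N : ℕ) (l : List X) (m : List Y) (hN : l.length + m.length ≤ N) :
    P (sg l) (sg m) ∈ Finsupp.supported (ZMod 2) (ZMod 2)
      {w : List (X × Y) | w.length + 1 = l.length + m.length ∧ ∀ q ∈ w, q.1 ∈ l ∧ q.2 ∈ m} := by
  induction N generalizing l m with
  | zero =>
    have : l = [] := by rw [← List.length_eq_zero_iff]; omega
    subst this; simp
  | succ N ih =>
    rcases l with _ | ⟨x, l⟩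
    · simp
    rcases m with _ | ⟨y, m⟩
    · simp
    have h1 := ih l (y :: m) (by simp at hN ⊢; omega)
    have h2 := ih (x :: l) m (by simp at hN ⊢; omega)
    have e : P (sg (x :: l)) (sg (y :: m)) = cns (x, y) ((nl (sg l) * nl (sg m)) • sg []) +
        cns (x, y) (P (sg l) (sg (y :: m))) + cns (x, y) (P (sg (x :: l)) (sg m)) := by
      rw [← cns_sg, ← cns_sg, P_cns]; simp only [map_add]
    rw [e]
    refine Submodule.add_mem _ (Submodule.add_mem _ ?_ ?_) ?_
    · rcases l with _ | ⟨x', l⟩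
      · rcases m with _ | ⟨y', m⟩
        · simp only [nl_nil, mul_one, one_smul, cns_sg]
          exact sg_supp (by simp)
        · simp
      · simp
    · refine supp_ind _ (cns (x, y)) _ ?_ h1
      rintro w ⟨hw, hq⟩
      rw [cns_sg]
      refine sg_supp ⟨by simp at hw ⊢; omega, ?_⟩
      intro q hq'
      rcases List.mem_cons.1 hq' with rfl | hq'
      · simp
      · have := hq q hq'
        exact ⟨List.mem_cons_of_mem _ this.1, this.2⟩
    · refine supp_ind _ (cns (x, y)) _ ?_ h2
      rintro w ⟨hw, hq⟩
      rw [cns_sg]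
      refine sg_supp ⟨by simp at hw ⊢; omega, ?_⟩
      intro q hq'
      rcases List.mem_cons.1 hq' with rfl | hq'
      · simp
      · have := hq q hq'
        exact ⟨this.1, List.mem_cons_of_mem _ this.2⟩

lemma P_mem {X Y : Type} {U : Set (X × X)} {V : Set (Y × Y)} {W : Set ((X × Y) × (X × Y))}
    {i j : ℕ} (h : ∀ a b c e, (a, b) ∈ U → (c, e) ∈ V → ((a, c), (b, e)) ∈ W)
    {c : Ch X} {c' : Ch Y} (hc : c ∈ Sm U i) (hc' : c' ∈ Sm V j) : P c c' ∈ Sm W (i + j) := by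
  have key : ∀ l : List X, (l.length = i + 1 ∧ ∀ a ∈ l, ∀ b ∈ l, (a, b) ∈ U) →
      P (sg l) c' ∈ Sm W (i + j) := by
    intro l hl
    refine supp_ind _ (P (sg l)) _ ?_ hc'
    intro m hm
    refine Finsupp.supported_mono ?_ (PL_supp _ l m le_rfl)
    rintro w ⟨hw, hq⟩
    refine ⟨by have := hl.1; have := hm.1; omega, ?_⟩
    rintro ⟨a, c⟩ ha ⟨b, e⟩ hb
    exact h _ _ _ _ (hl.2 a (hq _ ha).1 b (hq _ hb).1) (hm.2 c (hq _ ha).2 e (hq _ hb).2)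
  exact supp_ind _ (P.flip c') _ key hc

lemma Sm_mono {X : Type} {U V : Set (X × X)} (h : U ⊆ V) {k : ℕ} {c : Ch X} (hc : c ∈ Sm U k) :
    c ∈ Sm V k := by
  refine Finsupp.supported_mono ?_ hc
  rintro l ⟨h1, h2⟩
  exact ⟨h1, fun a ha b hb => h (h2 a ha b hb)⟩

lemma bd_zero_of_Sm {X : Type} {U : Set (X × X)} {c : Ch X} (hc : c ∈ Sm U 0) : bd c = 0 := by
  have := supp_ind _ bd (⊥ : Submodule (ZMod 2) (Ch X)) ?_ hc
  · simpa using this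
  rintro l ⟨h1, -⟩
  obtain ⟨x, rfl⟩ := List.length_eq_one_iff.1 h1
  simp [bd_apply, d_cons, add_self']

lemma P_pt {X Y : Type} (c : Ch X) (y : Y) :
    P c (sg [y]) = mp (fun x => (x, y)) c + nl c • sg [] := by
  have : P.flip (sg [y]) = mp (fun x => (x, y)) + nl.smulRight (sg ([] : List (X × Y))) := by
    apply ch_ext
    intro l
    induction l with
    | nil => simp [add_self']
    | cons x l ih =>
      simp only [LinearMap.flip_apply, LinearMap.add_apply, LinearMap.smulRight_apply] at ih ⊢
      rw [← cns_sg x l, ← cns_sg y, P_cns, cns_sg y, ih, mp_cns]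
      simp only [nl_nil, mul_one, P_nil_right, add_zero, nl_cns, zero_smul]
      rw [add_left_comm, add_self', add_zero]
  exact LinearMap.congr_fun this c

section psi
variable {V : Type} (s : ℕ → V → ZMod 2)

def psiL : ℕ → List V → ZMod 2
  | _, [] => 0
  | _, [_] => 1
  | m, v :: w :: l => (s m v + s m w) * psiL (m + 1) (w :: l)

def psi (m : ℕ) : Ch V →ₗ[ZMod 2] ZMod 2 := lin (psiL s m)

def phiL (m : ℕ) : List V → ZMod 2
  | [] => 0
  | v :: l => s m v * psiL s (m + 1) (v :: l)

def phi (m : ℕ) : Ch V →ₗ[ZMod 2] ZMod 2 := lin (phiL s m)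

lemma psi_cns2 (m : ℕ) (v w : V) (c : Ch V) :
    psi s m (cns v (cns w c)) = (s m v + s m w) * psi s (m + 1) (cns w c) := by
  have : (psi s m).comp ((cns v).comp (cns w))
      = (s m v + s m w) • (psi s (m + 1)).comp (cns w) := ch_ext (by simp [psi, psiL])
  exact LinearMap.congr_fun this c

lemma phi_cns (m : ℕ) (v : V) (c : Ch V) :
    phi s m (cns v c) = s m v * psi s (m + 1) (cns v c) := by
  have : (phi s m).comp (cns v) = (s m v) • (psi s (m + 1)).comp (cns v) :=
    ch_ext (by simp [psi, phi, phiL])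
  exact LinearMap.congr_fun this c

lemma psi_d (m : ℕ) (l : List V) : psi s m (d (sg l)) = 0 := by
  induction l generalizing m with
  | nil => simp
  | cons v l ih =>
    rcases l with _ | ⟨w, l⟩
    · simp [d_cons, psi, psiL]
    rcases l with _ | ⟨u, l⟩
    · simp [d_cons, psi, psiL, add_self']
    have h := ih (m + 1)
    rw [d_cons w, map_add] at h
    rw [d_cons, d_cons w, map_add, map_add, map_add, psi_cns2]
    have h' : psi s (m + 1) (cns w (d (sg (u :: l)))) = psi s (m + 1) (sg (u :: l)) := by
      generalize psi s (m + 1) (cns w (d (sg (u :: l)))) = p at h ⊢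
      generalize psi s (m + 1) (sg (u :: l)) = q at h ⊢
      revert p q; decide
    rw [h', cns_sg]
    simp only [psi, lin_sg, psiL]
    generalize psiL s (m + 1) (u :: l) = p
    generalize s m v = x
    generalize s m w = y
    generalize s m u = z
    revert p x y z; decide

lemma phi_d (m : ℕ) (v w : V) (l : List V) :
    phi s m (d (sg (v :: w :: l))) = psi s m (sg (v :: w :: l)) := by
  have h := psi_d s (m + 1) (v :: w :: l)
  rw [d_cons, map_add] at h ⊢
  rw [phi_cns]
  simp only [psi, phi, lin_sg, psiL, phiL] at h ⊢
  generalize lin (psiL s (m + 1)) (cns v (d (sg (w :: l)))) = p at h ⊢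
  generalize psiL s (m + 1) (w :: l) = q at h ⊢
  generalize s m v = x
  generalize s m w = y
  revert p q x y; decide

lemma phi_bd (m k : ℕ) {U : Set (V × V)} {c : Ch V} (hc : c ∈ Sm U (k + 1)) :
    phi s m (bd c) = psi s m c := by
  have := supp_ind _ ((phi s m).comp bd - psi s m) (⊥ : Submodule (ZMod 2) (ZMod 2)) ?_ hc
  · have h : phi s m (bd c) - psi s m c = 0 := by simpa using this
    exact sub_eq_zero.1 h
  rintro l ⟨h1, -⟩
  rcases l with _ | ⟨v, _ | ⟨w, l⟩⟩
  · simp at h1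
  · simp at h1
  simp [bd_apply, phi_d]

lemma psiL_map (ν : V → V) (hν : ∀ m v, s m (ν v) = s m v + 1) (l : List V) (m : ℕ) :
    psiL s m (l.map ν) = psiL s m l := by
  induction l generalizing m with
  | nil => rfl
  | cons v l ih =>
    rcases l with _ | ⟨w, l⟩
    · rfl
    have := ih (m + 1)
    simp only [List.map_cons, psiL, hν] at this ⊢
    rw [this]
    congr 1
    generalize s m v = x
    generalize s m w = y
    revert x y; decide

lemma phi_sym (ν : V → V) (hν : ∀ m v, s m (ν v) = s m v + 1) (m : ℕ) (c : Ch V) :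
    phi s m (c + mp ν c) = psi s (m + 1) c := by
  have : phi s m + (phi s m).comp (mp ν) = psi s (m + 1) := by
    apply ch_ext
    intro l
    rcases l with _ | ⟨v, l⟩
    · simp [phi, psi, phiL, psiL]
    have h := psiL_map s ν hν (v :: l) (m + 1)
    simp only [List.map_cons] at h
    simp only [LinearMap.add_apply, LinearMap.comp_apply, mp_sg, List.map_cons, phi, psi, lin_sg,
      phiL, h, hν]
    generalize psiL s (m + 1) (v :: l) = p
    generalize s m v = x
    revert x p; decide
  simpa using LinearMap.congr_fun this c

lemma psiL_zero (i : ℕ) : ∀ (m : ℕ) (l : List V), i + 2 ≤ l.length →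
    (∀ a ∈ l, ∀ b ∈ l, s (m + i) a = s (m + i) b) → psiL s m l = 0 := by
  induction i with
  | zero =>
    intro m l hl h
    rcases l with _ | ⟨v, _ | ⟨w, l⟩⟩
    · simp at hl
    · simp at hl
    have := h v (by simp) w (by simp)
    simp only [add_zero] at this
    simp [psiL, this, add_self']
  | succ i ih =>
    intro m l hl h
    rcases l with _ | ⟨v, _ | ⟨w, l⟩⟩
    · simp at hl
    · simp at hl
    have := ih (m + 1) (w :: l) (by simp at hl ⊢; omega) (by
      intro a ha b hb
      have := h a (List.mem_cons_of_mem _ ha) b (List.mem_cons_of_mem _ hb)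
      rwa [show m + 1 + i = m + (i + 1) by omega])
    simp [psiL, this]

theorem no_chain (ν : V → V) (hν : ∀ m v, s m (ν v) = s m v + 1) (n : ℕ) (e : ℕ → Ch V)
    (he : ∀ k < n, e k ∈ Sm Set.univ k)
    (hb : ∀ k < n, bd (e (k + 1)) = e k + mp ν (e k)) (h0 : aug (e 0) = 1)
    (U : Set (V × V)) (hn : e n ∈ Sm U n)
    (hU : ∀ l : List V, l ≠ [] → (∀ a ∈ l, ∀ b ∈ l, (a, b) ∈ U) →
      ∃ i < n, ∀ a ∈ l, ∀ b ∈ l, s i a = s i b) : False := by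
  have he' : ∀ k ≤ n, e k ∈ Sm Set.univ k := by
    intro k hk
    rcases hk.lt_or_eq with h | rfl
    · exact he k h
    · exact Sm_mono (Set.subset_univ _) hn
  have h1 : ∀ k m, k ≤ n → psi s m (e k) = 1 := by
    intro k
    induction k with
    | zero =>
      intro m _
      have := supp_ind _ (psi s m - aug) (⊥ : Submodule (ZMod 2) (ZMod 2)) ?_ (he' 0 (by omega))
      · have h : psi s m (e 0) - aug (e 0) = 0 := by simpa using this
        rw [sub_eq_zero.1 h, h0]
      rintro l ⟨h1, -⟩
      obtain ⟨x, rfl⟩ := List.length_eq_one_iff.1 h1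
      simp [psi, psiL]
    | succ k ih =>
      intro m hk
      rw [← phi_bd s m k (he' _ hk), hb k (by omega), phi_sym s ν hν]
      exact ih _ (by omega)
  have h2 : psi s 0 (e n) = 0 := by
    have := supp_ind _ (psi s 0) (⊥ : Submodule (ZMod 2) (ZMod 2)) ?_ hn
    · simpa using this
    rintro l ⟨hl, hl'⟩
    obtain ⟨i, hi, h⟩ := hU l (by rintro rfl; simp at hl) hl'
    simp only [psi, lin_sg, Submodule.mem_bot]
    exact psiL_zero s i 0 l (by omega) (by simpa using h)
  rw [h1 n 0 le_rfl] at h2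
  exact one_ne_zero h2

end psi
end
end BU

namespace BU
noncomputable section
open Uniformity

lemma exists_path (U : Set (unitInterval × unitInterval)) (hU : U ∈ 𝓤 unitInterval) :
    ∃ c ∈ Sm U 1, bd c = sg [0] + sg [1] := by
  obtain ⟨ε, hε, h⟩ := Metric.mem_uniformity_dist.1 hU
  obtain ⟨N, hN⟩ := exists_nat_one_div_lt hε
  set M : ℝ := (N : ℝ) + 1 with hM
  have hM0 : 0 < M := by positivity
  let t : ℕ → unitInterval := fun j => Set.projIcc 0 1 zero_le_one ((j : ℝ) / M)
  have ht0 : t 0 = 0 := by simp [t]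
  have ht1 : t (N + 1) = 1 := by
    simp only [t, Nat.cast_add, Nat.cast_one]
    rw [← hM, div_self hM0.ne', Set.projIcc_right]; rfl
  have hd : ∀ j, dist (t j) (t (j + 1)) < ε := by
    intro j
    have := (LipschitzWith.projIcc (zero_le_one (α := ℝ))).dist_le_mul ((j : ℝ) / M)
      (((j + 1 : ℕ) : ℝ) / M)
    refine lt_of_le_of_lt this ?_
    rw [Real.dist_eq]
    have : (j : ℝ) / M - ((j + 1 : ℕ) : ℝ) / M = -(1 / M) := by push_cast; ring
    rw [this, abs_neg, abs_of_pos (by positivity)]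
    simpa using hN
  refine ⟨∑ j ∈ Finset.range (N + 1), sg [t j, t (j + 1)], ?_, ?_⟩
  · refine Submodule.sum_mem _ fun j _ => sg_supp ⟨rfl, ?_⟩
    intro a ha b hb
    simp only [List.mem_cons, List.not_mem_nil, or_false] at ha hb
    apply h
    rcases ha with rfl | rfl <;> rcases hb with rfl | rfl
    · simpa using hε
    · exact hd j
    · rw [dist_comm]; exact hd j
    · simpa using hε
  · have : ∀ K : ℕ, bd (∑ j ∈ Finset.range K, sg [t j, t (j + 1)]) = sg [t 0] + sg [t K] := by
      intro K
      induction K with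
      | zero => simp [add_self']
      | succ K ih =>
        rw [Finset.sum_range_succ, map_add, ih]
        have : bd (sg [t K, t (K + 1)]) = sg [t (K + 1)] + sg [t K] := by
          simp [bd_apply, d_cons]
        rw [this, add_assoc, add_left_comm (sg [t K]), add_self', add_zero]
    rw [this, ht0, ht1]

def HasIdx (X : Type) [UniformSpace X] (a : X → X) (n : ℕ) : Prop :=
  ∀ U ∈ 𝓤 X, ∃ c : ℕ → Ch X, (∀ k, c k ∈ Sm U k) ∧ (∀ k, n ≤ k → c k = 0) ∧
    (∀ k, k + 1 < n → bd (c (k + 1)) = c k + mp a (c k)) ∧ aug (c 0) = 1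

lemma mp_id' {X : Type} (a : X → X) (ha : ∀ x, a (a x) = x) (c : Ch X) : mp a (mp a c) = c := by
  rw [mp_mp]
  have : mp (a ∘ a) = (LinearMap.id : Ch X →ₗ[ZMod 2] Ch X) := ch_ext (by
    intro l
    have : a ∘ a = id := funext ha
    simp [this])
  rw [this]; rfl

/-- The algebraic heart of the doubling construction. -/
lemma doubling_alg {X : Type} (a : X → X) (ha : ∀ x, a (a x) = x) (n : ℕ) (hn : Even n)
    (hn0 : 0 < n) (c : ℕ → Ch X) (h0 : bd (c 0) = 0) (hz : ∀ k, n ≤ k → c k = 0)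
    (hb : ∀ k, k + 1 < n → bd (c (k + 1)) = c k + mp a (c k))
    (z : Ch X) (hzd : z = c (n - 1) + mp a (c (n - 1)))
    (p q : ℕ → Ch (X × X))
    (hp : ∀ k, p k = ∑ x ∈ Finset.HasAntidiagonal.antidiagonal k, P (c x.1) (((mp a) ^ x.1) (c x.2)))
    (hq : ∀ k, q k = if n ≤ k + 1 then P z (c (k + 1 - n)) else 0) :
    (∀ k, bd (p (k + 1)) = p k + mp (Prod.map a a) (p k) + (q k + mp Prod.swap (q k))) ∧
    bd (q 0) = 0 ∧
    (∀ k, k + 2 < 2 * n → bd (q (k + 1)) = q k + mp (Prod.map a a) (q k)) := by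
  have hn2 : 2 ≤ n := by obtain ⟨m, rfl⟩ := hn; omega
  have hAA : ∀ x : Ch X, mp a (mp a x) = x := mp_id' a ha
  have hAz : mp a z = z := by rw [hzd, map_add, hAA, add_comm]
  have hAiz : ∀ i : ℕ, ((mp a) ^ i) z = z := by
    intro i
    induction i with
    | zero => rfl
    | succ i ih => rw [pow_succ', Module.End.mul_apply, ih, hAz]
  have hAn : ∀ x : Ch X, ((mp a) ^ n) x = x := by
    obtain ⟨m, rfl⟩ := hn
    intro x
    have : (mp a) ^ 2 = (1 : Module.End (ZMod 2) (Ch X)) := by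
      apply LinearMap.ext
      intro u
      rw [pow_two, Module.End.mul_apply, hAA]; rfl
    rw [← two_mul, pow_mul, this, one_pow]; rfl
  have hAbd : ∀ (i : ℕ) (x : Ch X), bd (((mp a) ^ i) x) = ((mp a) ^ i) (bd x) := by
    intro i
    induction i with
    | zero => intro x; rfl
    | succ i ih =>
      intro x
      rw [pow_succ', Module.End.mul_apply, Module.End.mul_apply, bd_mp, ih]
  have hbz : bd z = 0 := by
    have h := hb (n - 2) (by omega)
    rw [show n - 2 + 1 = n - 1 by omega] at h
    rw [hzd, map_add, bd_mp, h, map_add, hAA, add_comm (mp a _), add_self']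
  set ζ : ℕ → Ch X := fun k => if k = n then z else 0 with hζ
  have hb' : ∀ k, bd (c (k + 1)) = c k + mp a (c k) + ζ (k + 1) := by
    intro k
    rcases lt_trichotomy (k + 1) n with h | h | h
    · simp [hζ, hb k h, h.ne]
    · rw [hz (k + 1) h.ge]
      simp only [hζ, h, if_true, hzd]
      rw [show k = n - 1 by omega, add_self']
      simp
    · rw [hz (k + 1) h.le, hz k (by omega)]
      simp [hζ, h.ne']
  refine ⟨?_, ?_, ?_⟩
  · intro k
    have e1 : bd (p (k + 1)) = ∑ x ∈ Finset.HasAntidiagonal.antidiagonal k,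
        (P (c x.1 + mp a (c x.1) + ζ (x.1 + 1)) (((mp a) ^ (x.1 + 1)) (c x.2)) +
          P (c x.1) (((mp a) ^ x.1) (c x.2 + mp a (c x.2) + ζ (x.2 + 1)))) := by
      rw [hp, map_sum]
      simp only [bd_P, hAbd, Finset.sum_add_distrib]
      congr 1
      · rw [Finset.Nat.sum_antidiagonal_succ]
        simp [h0, hb']
      · rw [Finset.Nat.sum_antidiagonal_succ']
        simp [h0, hb']
    have e2 : ∀ x : ℕ × ℕ,
        (P (c x.1 + mp a (c x.1) + ζ (x.1 + 1)) (((mp a) ^ (x.1 + 1)) (c x.2)) +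
          P (c x.1) (((mp a) ^ x.1) (c x.2 + mp a (c x.2) + ζ (x.2 + 1)))) =
        (P (c x.1) (((mp a) ^ x.1) (c x.2)) +
          mp (Prod.map a a) (P (c x.1) (((mp a) ^ x.1) (c x.2)))) +
        (P (ζ (x.1 + 1)) (((mp a) ^ (x.1 + 1)) (c x.2)) +
          P (c x.1) (((mp a) ^ x.1) (ζ (x.2 + 1)))) := by
      intro x
      have h1 : ((mp a) ^ (x.1 + 1)) (c x.2) = mp a (((mp a) ^ x.1) (c x.2)) := by
        rw [pow_succ', Module.End.mul_apply]
      have h2 : ((mp a) ^ x.1) (mp a (c x.2)) = mp a (((mp a) ^ x.1) (c x.2)) := by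
        rw [← Module.End.mul_apply, ← pow_succ, h1]
      rw [mp_P, h1]
      simp only [map_add, LinearMap.add_apply, h2]
      have e := add_self' (P (c x.1) (mp a (((mp a) ^ x.1) (c x.2))))
      apply eq_of_sub_eq_zero
      rw [← e]
      abel
    have e3 : ∑ x ∈ Finset.HasAntidiagonal.antidiagonal k, P (ζ (x.1 + 1)) (((mp a) ^ (x.1 + 1)) (c x.2))
        = q k := by
      rw [hq]
      split_ifs with h
      · rw [Finset.sum_eq_single (n - 1, k + 1 - n)]
        · simp only [hζ, show n - 1 + 1 = n by omega, if_true, hAn]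
        · rintro ⟨i, j⟩ hx hne
          simp only [Finset.HasAntidiagonal.mem_antidiagonal] at hx
          have : i + 1 ≠ n := by
            rintro h; apply hne; ext <;> simp <;> omega
          simp [hζ, this]
        · intro hx; exact absurd (Finset.HasAntidiagonal.mem_antidiagonal.2 (by simp; omega)) hx
      · refine Finset.sum_eq_zero ?_
        rintro ⟨i, j⟩ hx
        simp only [Finset.HasAntidiagonal.mem_antidiagonal] at hx
        have : i + 1 ≠ n := by omega
        simp [hζ, this]
    have e4 : ∑ x ∈ Finset.HasAntidiagonal.antidiagonal k, P (c x.1) (((mp a) ^ x.1) (ζ (x.2 + 1)))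
        = mp Prod.swap (q k) := by
      rw [hq]
      split_ifs with h
      · rw [Finset.sum_eq_single (k + 1 - n, n - 1), swap_P]
        · simp only [hζ, show n - 1 + 1 = n by omega, if_true, hAiz]
        · rintro ⟨i, j⟩ hx hne
          simp only [Finset.HasAntidiagonal.mem_antidiagonal] at hx
          have : j + 1 ≠ n := by
            rintro h; apply hne; ext <;> simp <;> omega
          simp [hζ, this]
        · intro hx; exact absurd (Finset.HasAntidiagonal.mem_antidiagonal.2 (by simp; omega)) hx
      · rw [map_zero]
        refine Finset.sum_eq_zero ?_
        rintro ⟨i, j⟩ hx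
        simp only [Finset.HasAntidiagonal.mem_antidiagonal] at hx
        have : j + 1 ≠ n := by omega
        simp [hζ, this]
    rw [e1, Finset.sum_congr rfl fun x _ => e2 x]
    simp only [Finset.sum_add_distrib]
    rw [e3, e4, hp k, map_sum]
  · rw [hq, if_neg (by omega), map_zero]
  · intro k hk
    rw [hq, hq]
    rcases lt_trichotomy (k + 2) n with h | h | h
    · rw [if_neg (by omega), if_neg (by omega)]; simp
    · rw [if_pos (by omega), if_neg (by omega), bd_P, hbz, show k + 1 + 1 - n = 0 by omega, h0]
      simp
    · rw [if_pos (by omega), if_pos (by omega), bd_P, hbz,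
        show k + 1 + 1 - n = (k + 1 - n) + 1 by omega, hb _ (by omega), mp_P, hAz]
      simp

lemma exists_prod_entourage {X Y : Type} [UniformSpace X] [UniformSpace Y]
    {W : Set ((X × Y) × (X × Y))} (hW : W ∈ 𝓤 (X × Y)) :
    ∃ U ∈ 𝓤 X, ∃ V ∈ 𝓤 Y, ∀ a b c e, (a, b) ∈ U → (c, e) ∈ V → ((a, c), (b, e)) ∈ W := by
  rw [uniformity_prod, Filter.mem_inf_iff] at hW
  obtain ⟨s, hs, t, ht, rfl⟩ := hW
  obtain ⟨U, hU, hUs⟩ := Filter.mem_comap.1 hs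
  obtain ⟨V, hV, hVt⟩ := Filter.mem_comap.1 ht
  exact ⟨U, hU, V, hV, fun a b c e h1 h2 => ⟨hUs h1, hVt h2⟩⟩

theorem doubling {X Y : Type} [UniformSpace X] [UniformSpace Y] (a : X → X)
    (ha : ∀ x, a (a x) = x) (hau : UniformContinuous a) (aY : Y → Y)
    (F : (X × X) × unitInterval → Y) (hF : UniformContinuous F)
    (hsw : ∀ x y, F ((x, y), 1) = F ((y, x), 0))
    (heq : ∀ x y t, F ((a x, a y), t) = aY (F ((x, y), t)))
    (n : ℕ) (hn : Even n) (hn0 : 0 < n) (h : HasIdx X a n) : HasIdx Y aY (2 * n) := by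
  intro U hU
  obtain ⟨V2, hV2, VI, hVI, hV⟩ := exists_prod_entourage (hF hU)
  obtain ⟨W1, hW1, W2, hW2, hW⟩ := exists_prod_entourage hV2
  have hWW := Filter.inter_mem hW1 hW2
  have hW2a : (fun x : X × X => (a x.1, a x.2)) ⁻¹' (W1 ∩ W2) ∈ 𝓤 X := hau hWW
  obtain ⟨c, hc, hz, hb, hau0⟩ := h _ (Filter.inter_mem hWW hW2a)
  obtain ⟨ι, hι, hbι⟩ := exists_path VI hVI
  set z : Ch X := c (n - 1) + mp a (c (n - 1)) with hzd
  set p : ℕ → Ch (X × X) :=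
    fun k => ∑ x ∈ Finset.HasAntidiagonal.antidiagonal k, P (c x.1) (((mp a) ^ x.1) (c x.2)) with hp
  set q : ℕ → Ch (X × X) := fun k => if n ≤ k + 1 then P z (c (k + 1 - n)) else 0 with hq
  obtain ⟨A1, A2, A3⟩ := doubling_alg a ha n hn hn0 c (bd_zero_of_Sm (hc 0)) hz hb z hzd p q
    (fun _ => rfl) (fun _ => rfl)
  -- smallness
  have hc1 : ∀ k, c k ∈ Sm W1 k := fun k => Sm_mono (fun x hx => hx.1.1) (hc k)
  have hc2 : ∀ k, c k ∈ Sm W2 k := fun k => Sm_mono (fun x hx => hx.1.2) (hc k)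
  have hca : ∀ k, mp a (c k) ∈ Sm W2 k := fun k => mp_mem a (fun x y hx => hx.2.2) (hc k)
  have hcp : ∀ i k, ((mp a) ^ i) (c k) ∈ Sm W2 k := by
    intro i k
    have : ((mp a) ^ i) (c k) = c k ∨ ((mp a) ^ i) (c k) = mp a (c k) := by
      induction i with
      | zero => left; rfl
      | succ i ih =>
        rw [pow_succ', Module.End.mul_apply]
        rcases ih with h | h
        · right; rw [h]
        · left; rw [h, mp_id' a ha]
    rcases this with h | h <;> rw [h]
    · exact hc2 k
    · exact hca k
  have hpm : ∀ k, p k ∈ Sm V2 k := by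
    intro k
    refine Submodule.sum_mem _ ?_
    rintro ⟨i, j⟩ hx
    rw [← Finset.HasAntidiagonal.mem_antidiagonal.1 hx]
    exact P_mem hW (hc1 i) (hcp i j)
  have hca1 : ∀ k, mp a (c k) ∈ Sm W1 k := fun k => mp_mem a (fun x y hx => hx.2.1) (hc k)
  have hqm : ∀ k, q k ∈ Sm V2 k := by
    intro k
    simp only [hq]
    split_ifs with h
    · have := P_mem hW (Submodule.add_mem _ (hc1 (n - 1)) (hca1 (n - 1))) (hc2 (k + 1 - n))
      rwa [show n - 1 + (k + 1 - n) = k by omega] at this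
    · exact Submodule.zero_mem _
  have hpt : ∀ t : unitInterval, (t, t) ∈ VI := fun t => refl_mem_uniformity hVI
  have hnq : ∀ k, nl (q k) = 0 := by
    intro k
    simp only [hq]
    split_ifs with h
    · exact nl_P _ _
    · simp
  set F0 : X × X → Y := fun x => F (x, 0) with hF0
  have hF0a : ∀ x : Ch (X × X), mp aY (mp F0 x) = mp F0 (mp (Prod.map a a) x) := by
    intro x
    rw [mp_mp, mp_mp]
    congr 1
    congr 1
    funext ⟨x, y⟩
    exact (heq x y 0).symm
  set D : Ch (X × X) →ₗ[ZMod 2] Ch Y := (mp F).comp (P.flip ι) with hD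
  have hDap : ∀ x, D x = mp F (P x ι) := fun _ => rfl
  have hDa : ∀ x : Ch (X × X), mp aY (D x) = D (mp (Prod.map a a) x) := by
    intro x
    have e : P (mp (Prod.map a a) x) ι = mp (Prod.map (Prod.map a a) id) (P x ι) := by
      rw [mp_P]
      congr 1
      have : mp (id : unitInterval → unitInterval) = LinearMap.id := ch_ext (by simp)
      rw [this]; rfl
    rw [hDap, hDap, e, mp_mp, mp_mp]
    congr 1
    congr 1
    funext ⟨⟨x, y⟩, t⟩
    exact (heq x y t).symm
  have hDb : ∀ x : Ch (X × X), nl x = 0 →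
      bd (D x) = D (bd x) + (mp F0 x + mp F0 (mp Prod.swap x)) := by
    intro x hx
    rw [hDap, hDap, bd_mp, bd_P, hbι, map_add, map_add, P_pt, P_pt, hx, map_add]
    simp only [zero_smul, add_zero, mp_mp]
    congr 3
    congr 1
    funext ⟨x, y⟩
    exact hsw x y
  refine ⟨fun k => if k < 2 * n then (match k with
    | 0 => mp F0 (p 0)
    | k + 1 => mp F0 (p (k + 1)) + D (q k)) else 0, ?_, ?_, ?_, ?_⟩
  · intro k
    dsimp only
    have h0 : ∀ k, mp F0 (p k) ∈ Sm U k := fun k =>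
      mp_mem F0 (fun x y hxy => hV x y 0 0 hxy (hpt 0)) (hpm k)
    split_ifs
    · rcases k with _ | k
      · exact h0 0
      · refine Submodule.add_mem _ (h0 _) ?_
        rw [hDap]
        exact mp_mem F (fun x y hxy => hxy) (P_mem hV (hqm k) hι)
    · exact Submodule.zero_mem _
  · intro k hk
    simp [hk]
  · intro k hk
    have e : bd (mp F0 (p (k + 1)) + D (q k)) =
        mp F0 (p k + mp (Prod.map a a) (p k)) + D (bd (q k)) := by
      rw [map_add, bd_mp, A1, hDb _ (hnq k), map_add]
      simp only [map_add]
      have e := add_self' (mp F0 (q k) + mp F0 (mp Prod.swap (q k)))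
      apply eq_of_sub_eq_zero
      rw [← e]
      abel
    dsimp only
    rw [if_pos hk, if_pos (by omega)]
    rw [e]
    rcases k with _ | k
    · rw [A2]
      simp only [map_add, hF0a, map_zero, add_zero]
    · rw [A3 k hk]
      simp only [map_add, hF0a, hDa]
      abel
  · dsimp only
    rw [if_pos (by omega)]
    rw [aug_mp]
    simp only [hp]
    simp [aug_P, hau0]

end
end BU

namespace BU
noncomputable section
open Uniformity

lemma HasIdx.map {X Y : Type} [UniformSpace X] [UniformSpace Y] {a : X → X} {aY : Y → Y}
    {n : ℕ} (h : HasIdx X a n) (g : X → Y) (hg : UniformContinuous g)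
    (hga : ∀ x, g (a x) = aY (g x)) : HasIdx Y aY n := by
  intro U hU
  obtain ⟨c, h1, h2, h3, h4⟩ := h _ (hg hU)
  refine ⟨fun k => mp g (c k), fun k => mp_mem g (fun x y hxy => hxy) (h1 k), ?_, ?_, ?_⟩
  · intro k hk; simp [h2 k hk]
  · intro k hk
    dsimp only
    rw [bd_mp, h3 k hk, map_add, mp_mp, mp_mp]
    congr 3
    funext x
    exact hga x
  · simpa using h4

abbrev OM (ι : Type) [Fintype ι] [DecidableEq ι] : Type :=
  {A : Matrix ι ι ℝ // A * A.transpose = 1}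

def ng {ι : Type} [Fintype ι] [DecidableEq ι] (A : OM ι) : OM ι := ⟨-A.1, by simp [A.2]⟩

lemma ng_ng {ι : Type} [Fintype ι] [DecidableEq ι] (A : OM ι) : ng (ng A) = A := by
  apply Subtype.ext; simp [ng]

instance {ι : Type} [Fintype ι] [DecidableEq ι] : CompactSpace (OM ι) := by
  refine (isCompact_iff_compactSpace (s := {A : Matrix ι ι ℝ | A * A.transpose = 1})).1 ?_
  have hK : IsCompact (Set.pi Set.univ fun _ : ι => Set.pi Set.univ fun _ : ι =>
      Set.Icc (-1 : ℝ) 1) := isCompact_univ_pi fun _ => isCompact_univ_pi fun _ => isCompact_Icc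
  refine IsCompact.of_isClosed_subset (X := Matrix ι ι ℝ) hK ?_ ?_
  · refine isClosed_eq ?_ continuous_const
    exact continuous_id.matrix_mul continuous_id.matrix_transpose
  · intro A hA i _ j _
    have hu : A ∈ Matrix.unitaryGroup ι ℝ := by
      rw [Matrix.mem_unitaryGroup_iff]
      simpa [Matrix.star_eq_conjTranspose] using hA
    have := entry_norm_bound_of_unitary hu i j
    rw [Real.norm_eq_abs, abs_le] at this
    exact this

lemma ng_cont {ι : Type} [Fintype ι] [DecidableEq ι] : Continuous (ng (ι := ι)) := by
  unfold ng; fun_prop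

section rot
variable {κ : Type} [Fintype κ] [DecidableEq κ]

def Rot (θ : ℝ) : Matrix (κ ⊕ κ) (κ ⊕ κ) ℝ :=
  Matrix.fromBlocks (Real.cos θ • 1) (-(Real.sin θ • 1)) (Real.sin θ • 1) (Real.cos θ • 1)

lemma Rot_mul (θ : ℝ) : Rot (κ := κ) θ * (Rot θ).transpose = 1 := by
  rw [Rot, Matrix.fromBlocks_transpose, Matrix.fromBlocks_multiply, ← Matrix.fromBlocks_one]
  have h := Real.sin_sq_add_cos_sq θ
  congr 1
  · simp [← add_smul, smul_smul]
    rw [show Real.cos θ * Real.cos θ + Real.sin θ * Real.sin θ = 1 by linarith, one_smul]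
  · simp [smul_smul, mul_comm]
  · simp [smul_smul, mul_comm]
  · simp [← add_smul, smul_smul]
    rw [show Real.sin θ * Real.sin θ + Real.cos θ * Real.cos θ = 1 by linarith, one_smul]

lemma Rot_mul' (θ : ℝ) : (Rot (κ := κ) θ).transpose * Rot θ = 1 :=
  mul_eq_one_comm.1 (Rot_mul θ)

lemma Rot_cont : Continuous (Rot (κ := κ)) := by
  unfold Rot
  refine Continuous.matrix_fromBlocks ?_ ?_ ?_ ?_ <;> fun_prop

def RotO (θ : ℝ) : OM (κ ⊕ κ) := ⟨Rot θ, Rot_mul θ⟩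

lemma base : HasIdx (OM (κ ⊕ κ)) ng 2 := by
  intro U hU
  have hc : Continuous (fun t : unitInterval => RotO (κ := κ) (Real.pi * t)) := by
    refine Continuous.subtype_mk (Rot_cont.comp ?_) _
    fun_prop
  have huc := CompactSpace.uniformContinuous_of_continuous hc
  obtain ⟨ι, hι, hb⟩ := exists_path _ (huc hU)
  refine ⟨fun k => match k with
    | 0 => sg [RotO 0]
    | 1 => mp (fun t : unitInterval => RotO (Real.pi * t)) ι
    | _ => 0, ?_, ?_, ?_, ?_⟩
  · intro k
    rcases k with _ | _ | k
    · refine sg_supp ⟨rfl, ?_⟩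
      intro a ha b hb
      simp only [List.mem_singleton] at ha hb
      subst ha hb
      exact refl_mem_uniformity hU
    · exact mp_mem (fun t : unitInterval => RotO (Real.pi * t)) (fun x y hxy => hxy) hι
    · exact Submodule.zero_mem _
  · intro k hk
    rcases k with _ | _ | k
    · omega
    · omega
    · rfl
  · intro k hk
    obtain rfl : k = 0 := by omega
    show bd (mp (fun t : unitInterval => RotO (Real.pi * t)) ι) =
      sg [RotO 0] + mp ng (sg [RotO 0])
    rw [bd_mp, hb, map_add, mp_sg, mp_sg, mp_sg]
    have : RotO (κ := κ) Real.pi = ng (RotO 0) := by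
      apply Subtype.ext
      simp only [RotO, Rot, ng, ← Matrix.fromBlocks_one, Matrix.fromBlocks_neg]
      simp
    simp [this]
  · simp

def dbl (x : (OM κ × OM κ) × unitInterval) : OM (κ ⊕ κ) :=
  ⟨(Rot (Real.pi / 2 * x.2)).transpose * Matrix.fromBlocks x.1.1.1 0 0 x.1.2.1 *
    Rot (Real.pi / 2 * x.2), by
    have h : Matrix.fromBlocks x.1.1.1 0 0 x.1.2.1 *
        (Matrix.fromBlocks x.1.1.1 0 0 x.1.2.1).transpose = 1 := by
      rw [Matrix.fromBlocks_transpose, Matrix.fromBlocks_multiply]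
      simp [x.1.1.2, x.1.2.2, Matrix.fromBlocks_one]
    rw [Matrix.transpose_mul, Matrix.transpose_mul, Matrix.transpose_transpose]
    calc _ = (Rot (Real.pi / 2 * x.2)).transpose * (Matrix.fromBlocks x.1.1.1 0 0 x.1.2.1 *
        (Rot (Real.pi / 2 * x.2) * (Rot (Real.pi / 2 * x.2)).transpose) *
        (Matrix.fromBlocks x.1.1.1 0 0 x.1.2.1).transpose) * Rot (Real.pi / 2 * x.2) := by
          simp only [Matrix.mul_assoc]
      _ = 1 := by rw [Rot_mul, Matrix.mul_one, h, Matrix.mul_one, Rot_mul']⟩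

lemma step (n : ℕ) (hn : Even n) (hn0 : 0 < n) (h : HasIdx (OM κ) ng n) :
    HasIdx (OM (κ ⊕ κ)) ng (2 * n) := by
  refine doubling ng ng_ng (CompactSpace.uniformContinuous_of_continuous ng_cont) ng
    dbl (CompactSpace.uniformContinuous_of_continuous ?_) ?_ ?_ n hn hn0 h
  · unfold dbl
    refine Continuous.subtype_mk ?_ _
    have h1 : Continuous fun x : (OM κ × OM κ) × unitInterval =>
        Rot (κ := κ) (Real.pi / 2 * x.2) := Rot_cont.comp (by fun_prop)
    have h2 : Continuous fun x : (OM κ × OM κ) × unitInterval =>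
        Matrix.fromBlocks x.1.1.1 0 0 x.1.2.1 :=
      Continuous.matrix_fromBlocks (by fun_prop) continuous_const continuous_const (by fun_prop)
    exact (h1.matrix_transpose.matrix_mul h2).matrix_mul h1
  · intro x y
    apply Subtype.ext
    simp [dbl, Rot, Matrix.fromBlocks_transpose, Matrix.fromBlocks_multiply]
  · intro x y t
    apply Subtype.ext
    have : Matrix.fromBlocks (-x.1) 0 0 (-y.1) = -Matrix.fromBlocks x.1 0 0 y.1 := by
      simp [Matrix.fromBlocks_neg]
    simp [dbl, ng, this]
end rot

lemma reidx {ι κ : Type} [Fintype ι] [DecidableEq ι] [Fintype κ] [DecidableEq κ] (e : ι ≃ κ)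
    {n : ℕ} (h : HasIdx (OM κ) ng n) : HasIdx (OM ι) ng n := by
  refine h.map (fun A => ⟨A.1.submatrix e e, ?_⟩)
    (CompactSpace.uniformContinuous_of_continuous ?_) ?_
  · rw [Matrix.transpose_submatrix, Matrix.submatrix_mul_equiv, A.2, Matrix.submatrix_one_equiv]
  · refine Continuous.subtype_mk ?_ _
    exact continuous_subtype_val.matrix_submatrix e e
  · intro A
    apply Subtype.ext
    rfl

theorem hasIdx_pow (r : ℕ) : HasIdx (OM (Fin (2 ^ (r + 1)))) ng (2 ^ (r + 1)) := by
  induction r with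
  | zero =>
    exact reidx (Fintype.equivOfCardEq (by simp)) (base (κ := Fin 1))
  | succ r ih =>
    have := step _ ⟨2 ^ r, by ring⟩ (by positivity) ih
    rw [show 2 ^ (r + 1 + 1) = 2 * 2 ^ (r + 1) by ring]
    exact reidx (Fintype.equivOfCardEq (by simp; ring)) this

section final
variable {n : ℕ}

abbrev VV (n : ℕ) : Type := {v : EuclideanSpace ℝ (Fin n) // 1 ≤ ‖v‖}

def vneg (v : VV n) : VV n := ⟨-v.1, by simpa using v.2⟩

lemma odd_gen (L : Type) [AddCommGroup L] [LinearOrder L] [IsOrderedAddMonoid L] :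
    ∃ t : L → ZMod 2, ∀ x, x ≠ 0 → t (-x) = t x + 1 := by
  classical
  refine ⟨fun x => if 0 < x then 1 else 0, ?_⟩
  intro x hx
  rcases lt_trichotomy 0 x with h | h | h
  · have : ¬ 0 < -x := by
      rw [not_lt]; exact (neg_lt_zero.2 h).le
    simp only [if_pos h, if_neg this]; decide
  · exact absurd h.symm hx
  · have : 0 < -x := neg_pos.2 h
    simp only [if_neg h.not_gt, if_pos this]; decide

lemma exists_odd (n : ℕ) : ∃ t : VV n → ZMod 2, ∀ v, t (vneg v) = t v + 1 := by
  obtain ⟨t, ht⟩ := odd_gen (Lex (Fin n → ℝ))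
  refine ⟨fun v => t (toLex v.1.ofLp), ?_⟩
  intro v
  have h1 : toLex (vneg v).1.ofLp = -toLex v.1.ofLp := rfl
  have h0 : toLex v.1.ofLp ≠ (0 : Lex (Fin n → ℝ)) := by
    intro h
    have h' : v.1.ofLp = 0 := h
    have : v.1 = 0 := by ext i; simp [h']
    have := v.2
    simp_all
    linarith
  dsimp only
  rw [h1, ht _ h0]

lemma nl_zero_of_Sm {X : Type} {U : Set (X × X)} {k : ℕ} {c : Ch X} (hc : c ∈ Sm U k) :
    nl c = 0 := by
  have := supp_ind _ nl (⊥ : Submodule (ZMod 2) (ZMod 2)) ?_ hc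
  · simpa using this
  · rintro l ⟨h1, -⟩
    rcases l with _ | ⟨x, l⟩
    · simp at h1
    · simp

lemma exists_big (hn : 0 < n) (v : VV n) : ∃ i, 1 / (n : ℝ) ≤ |v.1 i| := by
  by_contra! h
  have h1 : (1 : ℝ) ≤ ‖v.1‖ ^ 2 := one_le_pow₀ v.2
  rw [EuclideanSpace.real_norm_sq_eq] at h1
  have hn' : (1 : ℝ) ≤ n := by exact_mod_cast hn
  have h2 : ∑ i, v.1 i ^ 2 < ∑ _i : Fin n, 1 / (n : ℝ) := by
    haveI : Nonempty (Fin n) := ⟨⟨0, hn⟩⟩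
    refine Finset.sum_lt_sum_of_nonempty Finset.univ_nonempty fun i _ => ?_
    rw [← sq_abs]
    have h3 := h i
    have h4 : 1 / (n : ℝ) ≤ 1 := by rw [div_le_one (by linarith)]; exact hn'
    nlinarith [abs_nonneg (v.1 i)]
  simp at h2
  rw [mul_inv_cancel₀ (by linarith)] at h2
  linarith

theorem final (hn : 0 < n) (X : Type) [UniformSpace X] [CompactSpace X] (a : X → X)
    (ha : ∀ x, a (a x) = x) (hac : Continuous a) (hn2 : 2 ≤ n)
    (h : HasIdx X a n) (H : X × unitInterval → VV n) (hH : Continuous H)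
    (h0 : ∀ x, H (a x, 0) = vneg (H (x, 0))) (h1 : ∀ x, H (a x, 1) = H (x, 1)) : False := by
  classical
  have hHu := CompactSpace.uniformContinuous_of_continuous hH
  obtain ⟨t, ht⟩ := exists_odd n
  let s : ℕ → VV n → ZMod 2 := fun m v => if hm : m < n then
    (if 0 < v.1 ⟨m, hm⟩ then 1 else if v.1 ⟨m, hm⟩ < 0 then 0 else t v) else t v
  have hs : ∀ m v, s m (vneg v) = s m v + 1 := by
    intro m v
    by_cases hm : m < n
    · simp only [s, hm, dif_pos]
      have : (vneg v).1 ⟨m, hm⟩ = -v.1 ⟨m, hm⟩ := rfl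
      rw [this, ht]
      rcases lt_trichotomy 0 (v.1 ⟨m, hm⟩) with h | h | h
      · simp [h, h.not_gt]; decide
      · simp [← h]
      · simp [h, h.not_gt]
    · simp only [s, hm, dif_neg, not_false_eq_true, ht]
  have hn0 : (0 : ℝ) < 1 / n := by positivity
  let U : Set (VV n × VV n) := {p | dist p.1 p.2 < 1 / n}
  have hU : U ∈ 𝓤 (VV n) := Metric.dist_mem_uniformity hn0
  obtain ⟨W, hW, WI, hWI, hWW⟩ := exists_prod_entourage (hHu hU)
  have hau := CompactSpace.uniformContinuous_of_continuous hac
  obtain ⟨c, hc, hz, hb, hau0⟩ := h _ (Filter.inter_mem hW (hau hW))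
  obtain ⟨ι, hι, hbι⟩ := exists_path WI hWI
  have hc1 : ∀ k, c k ∈ Sm W k := fun k => Sm_mono (fun x hx => hx.1) (hc k)
  have hc2 : ∀ k, mp a (c k) ∈ Sm W k := fun k => mp_mem a (fun x y hx => hx.2) (hc k)
  obtain ⟨m, rfl⟩ : ∃ m, n = m + 2 := ⟨n - 2, by omega⟩
  set z : Ch X := c (m + 1) + mp a (c (m + 1)) with hzd
  have hzS : z ∈ Sm W (m + 1) := Submodule.add_mem _ (hc1 _) (hc2 _)
  have hbz : bd z = 0 := by
    rw [hzd, map_add, bd_mp, hb m (by omega), map_add, mp_id' a ha, add_comm (mp a (c m)),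
      add_self']
  have hnl : nl z = 0 := nl_zero_of_Sm hzS
  have e0 : ∀ x : Ch X, mp (fun x => H (x, 0)) (mp a x) = mp vneg (mp (fun x => H (x, 0)) x) := by
    intro x
    rw [mp_mp, mp_mp]
    congr 2
    funext y
    exact h0 y
  have e1 : ∀ x : Ch X, mp (fun x => H (x, 1)) (mp a x) = mp (fun x => H (x, 1)) x := by
    intro x
    rw [mp_mp]
    congr 2
    funext y
    exact h1 y
  have hne : mp H (P z ι) ∈ Sm U (m + 2) := by
    refine mp_mem (U := {p | (H p.1, H p.2) ∈ U}) H (fun x y hxy => hxy) ?_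
    exact P_mem (i := m + 1) (j := 1) (fun x x' y y' h1 h2 => hWW _ _ _ _ h1 h2) hzS hι
  refine no_chain s vneg hs (m + 2)
    (fun k => if k < m + 2 then mp (fun x => H (x, 0)) (c k) else mp H (P z ι)) ?_ ?_ ?_ U ?_ ?_
  · intro k hk
    simp only [hk, if_true]
    exact mp_mem _ (fun x y _ => Set.mem_univ _) (hc1 k)
  · intro k hk
    simp only [hk, if_true]
    by_cases hk' : k + 1 < m + 2
    · simp only [hk', if_true]
      rw [bd_mp, hb k hk', map_add, e0]
    · obtain rfl : k = m + 1 := by omega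
      simp only [hk', if_false]
      rw [bd_mp, bd_P, hbz, hbι, map_add, map_add (P z), P_pt, P_pt, hnl]
      simp only [zero_smul, add_zero, map_zero, LinearMap.zero_apply, zero_add, map_add]
      rw [mp_mp, mp_mp]
      have q0 : mp (H ∘ fun x => (x, 0)) z = mp (fun x => H (x, 0)) (c (m + 1)) +
          mp vneg (mp (fun x => H (x, 0)) (c (m + 1))) := by
        rw [← e0, ← map_add]; rfl
      have q1 : mp (H ∘ fun x => (x, 1)) z = 0 := by
        have : mp (H ∘ fun x => (x, 1)) z = mp (fun x => H (x, 1)) (c (m + 1)) +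
          mp (fun x => H (x, 1)) (mp a (c (m + 1))) := by
          rw [← map_add]; rfl
        rw [this, e1, add_self']
      rw [q0, q1, add_zero]
  · simpa using hau0
  · simpa using hne
  · intro l hl hlU
    obtain ⟨v, l, rfl⟩ := List.exists_cons_of_ne_nil hl
    obtain ⟨i, hi⟩ := exists_big hn v
    refine ⟨i, i.2, ?_⟩
    have key : ∀ b ∈ v :: l, s i b = s i v := by
      intro b hb
      have h3 : dist b v < 1 / ((m + 2 : ℕ) : ℝ) := hlU b hb v (by simp)
      have h4 : |b.1 i - v.1 i| ≤ dist b v := by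
        rw [Subtype.dist_eq, dist_eq_norm]
        exact PiLp.norm_apply_le (b.1 - v.1) i
      have h5 := abs_lt.1 (lt_of_le_of_lt h4 h3)
      simp only [s, i.2, dif_pos, Fin.eta]
      rcases le_abs.1 hi with h6 | h6
      · rw [if_pos (by linarith), if_pos (by linarith)]
      · have hv : v.1 i < 0 := by linarith
        have hb' : b.1 i < 0 := by linarith
        rw [if_neg hv.not_gt, if_neg hb'.not_gt, if_pos hv, if_pos hb']
    intro x hx y hy
    rw [key x hx, key y hy]
end final

end
end BU


lemma frame_orth {n m : ℕ} (h : m ≤ n) (A : BU.OM (Fin n)) :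
    Orthonormal ℝ (fun i : Fin m => (WithLp.toLp 2 (A.1 (Fin.castLE h i)) :
      EuclideanSpace ℝ (Fin n))) := by
  rw [orthonormal_iff_ite]
  intro i j
  have h2 := congrFun (congrFun A.2 (Fin.castLE h i)) (Fin.castLE h j)
  rw [Matrix.mul_apply, Matrix.one_apply] at h2
  simp only [Matrix.transpose_apply, Fin.castLE_inj] at h2
  rw [← h2, PiLp.inner_apply]
  exact Finset.sum_congr rfl fun x _ => by simp [mul_comm]

def toFrame {n m : ℕ} (h : m ≤ n) (A : BU.OM (Fin n)) : Stiefel n m :=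
  ⟨_, frame_orth h A⟩

lemma toFrame_cont {n m : ℕ} (h : m ≤ n) : Continuous (toFrame (n := n) h) := by
  refine Continuous.subtype_mk ?_ _
  refine continuous_pi fun i => ?_
  refine (PiLp.continuous_toLp 2 _).comp ?_
  exact (continuous_apply (Fin.castLE h i)).comp continuous_subtype_val

lemma toFrame_neg {n m : ℕ} (h : m ≤ n) (A : BU.OM (Fin n)) :
    toFrame h (BU.ng A) = negFrame (toFrame h A) := rfl

/-- For `n = 2^r` (`r > 0`) and `1 < 2k ≤ n`, there is no continuous equivariant map
`V_{n,n-1} → V_{n,2k}` (i.e. `SO(n) → V_{n,2k}`), where `C₂` acts antipodally on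
`V_{n,n-1}` and by the flip action on `V_{n,2k}`. -/
theorem no_antipodal_to_flip_map_from_SO (r : ℕ) (hr : 0 < r) (n k : ℕ)
    (hn : n = 2 ^ r) (h1 : 1 < 2 * k) (h2 : 2 * k ≤ n) :
    ¬ ∃ f : Stiefel n (n - 1) → Stiefel n (2 * k),
        Continuous f ∧ ∀ v, f (negFrame v) = flipFrame (f v) := by
  rintro ⟨f, hf, hfe⟩
  have hidx : BU.HasIdx (BU.OM (Fin n)) BU.ng n := by
    obtain ⟨r', rfl⟩ : ∃ r', r = r' + 1 := ⟨r - 1, by omega⟩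
    subst hn
    exact BU.hasIdx_pow r'
  let i0 : Fin (2 * k) := ⟨0, by omega⟩
  let i1 : Fin (2 * k) := ⟨1, h1⟩
  have f0 : finFlip i0 = i1 := rfl
  have f1 : finFlip i1 = i0 := rfl
  have hne : i0 ≠ i1 := by simp [i0, i1]
  let g : BU.OM (Fin n) → Stiefel n (2 * k) := fun A => f (toFrame (Nat.sub_le n 1) A)
  have hg : Continuous g := hf.comp (toFrame_cont _)
  have hgn : ∀ A, g (BU.ng A) = flipFrame (g A) := fun A => by
    simp only [g, toFrame_neg, hfe]
  have hnorm : ∀ (v : Stiefel n (2 * k)) (t : ℝ), 1 ≤ ‖v.1 i0 + t • v.1 i1‖ := by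
    intro v t
    have e : ‖v.1 i0 + t • v.1 i1‖ ^ 2 = 1 + t ^ 2 := by
      rw [norm_add_sq_real, inner_smul_right, v.2.2 hne, norm_smul, v.2.1, v.2.1]
      simp
    by_contra! hlt
    nlinarith [norm_nonneg (v.1 i0 + t • v.1 i1), sq_nonneg t]
  have c0 : ∀ i, Continuous fun A => (g A).1 i := fun i =>
    (continuous_apply i).comp (continuous_subtype_val.comp hg)
  refine BU.final (by omega) (BU.OM (Fin n)) BU.ng BU.ng_ng BU.ng_cont (by omega) hidx
    (fun x => ⟨(g x.1).1 i0 + (2 * (x.2 : ℝ) - 1) • (g x.1).1 i1, hnorm _ _⟩) ?_ ?_ ?_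
  · refine Continuous.subtype_mk ?_ _
    have a0 : Continuous fun x : BU.OM (Fin n) × unitInterval => (g x.1).1 i0 :=
      (c0 i0).comp continuous_fst
    have a1 : Continuous fun x : BU.OM (Fin n) × unitInterval => (g x.1).1 i1 :=
      (c0 i1).comp continuous_fst
    have a2 : Continuous fun x : BU.OM (Fin n) × unitInterval => 2 * (x.2 : ℝ) - 1 := by
      fun_prop
    exact a0.add (a2.smul a1)
  · intro x
    apply Subtype.ext
    simp only [hgn, flipFrame, Function.comp, f0, f1, BU.vneg]
    simp
  · intro x
    apply Subtype.ext
    simp only [hgn, flipFrame, Function.comp, f0, f1]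
    norm_num
    abel
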